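/- arXiv:1603.06688 — 3 statements merged into one kernel-verified Lean document; each statement's English description precedes it below -/
import Mathlib

section
/- Fix n ≥ 1 and a symmetric matrix B ∈ ℝ^{n×n}. Define H_L : ℝⁿ × ℝⁿ × ℝⁿ → ℝ by H_L(δ, E''_d, E''_q) := −(1/4)·Σ_{i=1}^n Σ_{k=1}^n B_{ik}·[2(E''_{di}E''_{qk} − E''_{dk}E''_{qi}) sin δ_{ik} − 2(E''_{di}E''_{dk} + E''_{qi}E''_{qk}) cos δ_{ik} + (E''_{di})² + (E''_{dk})² + (E''_{qi})² + (E''_{qk})²], where δ_{ik} := δ_i − δ_k. Then for every i, the partial derivative of H_L with respect to δ_i equals the electrical power P_{ei} := −Σ_{k=1}^n B_{ik}[(E''_{di}E''_{dk} + E''_{qi}E''_{qk}) sin δ_{ik} + (E''_{di}E''_{qk} − E''_{qi}E''_{dk}) cos δ_{ik}]. -/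
/-!
By the chain rule, the derivative of the `(a, b)` summand of the double sum along `δ_i` is
`G a b * (d a - d b)`, where `d` is the indicator of the index `i` and `G a b` is the derivative of
the summand in `δ_a - δ_b`. Since `B` is symmetric, `G` is antisymmetric, so row `i` and column `i`
contribute equally and the double sum collapses to `2 * ∑ k, G i k`, which is `-4` times the
electrical power at node `i`.
-/

open Matrix Real

/-- Total energy stored in the purely inductive transmission lines of an
`n`-machine power network with symmetric susceptance matrix `B` (the factor `1/4`
accounts for each unordered pair being counted twice in the double sum). -/
noncomputable def HL {n : ℕ} (B : Matrix (Fin n) (Fin n) ℝ)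
    (δ Ed Eq : Fin n → ℝ) : ℝ :=
  -(1 / 4) * ∑ i, ∑ k, B i k *
    (2 * (Ed i * Eq k - Ed k * Eq i) * Real.sin (δ i - δ k)
      - 2 * (Ed i * Ed k + Eq i * Eq k) * Real.cos (δ i - δ k)
      + Ed i ^ 2 + Ed k ^ 2 + Eq i ^ 2 + Eq k ^ 2)

/-- The partial derivative of the line energy `H_L` with respect to the rotor
angle `δ_i` equals the electrical power `P_{ei}` produced at node `i`. -/
theorem stmt_7 (n : ℕ) (hn : 1 ≤ n) (B : Matrix (Fin n) (Fin n) ℝ) (hB : B.IsSymm)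
    (δ Ed Eq : Fin n → ℝ) (i : Fin n) :
    HasDerivAt (fun t : ℝ => HL B (Function.update δ i t) Ed Eq)
      (-(∑ k, B i k *
        ((Ed i * Ed k + Eq i * Eq k) * Real.sin (δ i - δ k)
          + (Ed i * Eq k - Eq i * Ed k) * Real.cos (δ i - δ k))))
      (δ i) := by
  -- Each angle `δ_a` has derivative `d a` (the indicator of `a = i`) as `δ_i` varies.
  set d : Fin n → ℝ := Pi.single i 1 with hd
  have hδ : ∀ a, HasDerivAt (fun t : ℝ => Function.update δ i t a) (d a) (δ i) :=
    hasDerivAt_pi.1 (hasDerivAt_update δ i (δ i))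
  let G : Fin n → Fin n → ℝ := fun a b => B a b *
    (2 * (Ed a * Eq b - Ed b * Eq a) * Real.cos (δ a - δ b)
      + 2 * (Ed a * Ed b + Eq a * Eq b) * Real.sin (δ a - δ b))
  have hG : ∀ a b, G a b = -G b a := by
    intro a b
    simp only [G]
    rw [hB.apply b a, ← neg_sub (δ b) (δ a), Real.cos_neg, Real.sin_neg]
    ring
  have hterm : ∀ a b, HasDerivAt (fun t : ℝ => B a b *
      (2 * (Ed a * Eq b - Ed b * Eq a)
          * Real.sin (Function.update δ i t a - Function.update δ i t b)
        - 2 * (Ed a * Ed b + Eq a * Eq b)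
          * Real.cos (Function.update δ i t a - Function.update δ i t b)
        + Ed a ^ 2 + Ed b ^ 2 + Eq a ^ 2 + Eq b ^ 2))
      (G a b * d a - G a b * d b) (δ i) := by
    intro a b
    have hab := (hδ a).sub (hδ b)
    have h := (((((((hab.sin).const_mul (2 * (Ed a * Eq b - Ed b * Eq a))).sub
      ((hab.cos).const_mul (2 * (Ed a * Ed b + Eq a * Eq b)))).add_const (Ed a ^ 2)).add_const
      (Ed b ^ 2)).add_const (Eq a ^ 2)).add_const (Eq b ^ 2)).const_mul (B a b)
    refine h.congr_deriv ?_
    simp only [G, Pi.sub_apply, Function.update_eq_self]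
    ring
  have hsum := (HasDerivAt.fun_sum (u := Finset.univ) fun a _ =>
    HasDerivAt.fun_sum (u := Finset.univ) fun b _ => hterm a b).const_mul (-(1 / 4) : ℝ)
  refine hsum.congr_deriv ?_
  have h1 : ∑ a, ∑ b, G a b * d a = ∑ b, G i b := by
    rw [Finset.sum_comm]
    simp [hd, Pi.single_apply]
  have h2 : ∑ a, ∑ b, G a b * d b = -∑ b, G i b := by
    rw [← Finset.sum_neg_distrib]
    simp only [hd, Pi.single_apply, mul_ite, mul_one, mul_zero, Finset.sum_ite_eq',
      Finset.mem_univ, if_true]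
    exact Finset.sum_congr rfl fun a _ => hG a i
  simp only [Finset.sum_sub_distrib]
  rw [h1, h2, sub_neg_eq_add, ← two_mul, ← mul_assoc, Finset.mul_sum, ← Finset.sum_neg_distrib]
  refine Finset.sum_congr rfl fun k _ => ?_
  simp only [G]
  ring
end

section
/- Fix n ≥ 1 and a symmetric matrix B ∈ ℝ^{n×n}, and set B_{ii} := Σ_{k≠i} B_{ik}. Define H_L : ℝⁿ × ℝⁿ × ℝⁿ → ℝ by H_L(δ, E''_d, E''_q) := −(1/4)·Σ_{i=1}^n Σ_{k=1}^n B_{ik}·[2(E''_{di}E''_{qk} − E''_{dk}E''_{qi}) sin δ_{ik} − 2(E''_{di}E''_{dk} + E''_{qi}E''_{qk}) cos δ_{ik} + (E''_{di})² + (E''_{dk})² + (E''_{qi})² + (E''_{qk})²], where δ_{ik} := δ_i − δ_k. Then for every i: (a) the partial derivative of H_L with respect to E''_{qi} equals −I_{di}, and (b) the partial derivative of H_L with respect to E''_{di} equals I_{qi}, where I_{di} := B_{ii}E''_{qi} − Σ_{k≠i} B_{ik}(E''_{dk} sin δ_{ik} + E''_{qk} cos δ_{ik}) and I_{qi} :=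 −B_{ii}E''_{di} − Σ_{k≠i} B_{ik}(E''_{qk} sin δ_{ik} − E''_{dk} cos δ_{ik}). -/
/-!
The summand of `HL` is symmetric in its two indices (as `B` is symmetric, and both `sin` and its
coefficient change sign under the swap) and vanishes on the diagonal. Only row `i` and column `i`
involve the `i`-th voltage, and they contribute equally, so the derivative of the double sum is
twice the sum of the derivatives of the `(i, k)` summands over `k ≠ i`
(`hasDerivAt_double_sum`). Each of these summands is a quadratic polynomial in that voltage.
-/

open Matrix Real Finset

/-- If a symmetric family `F a b` depends on the variable only when `a = i` or `b = i`, with a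
stationary diagonal entry, then row and column `i` contribute equally to the derivative of the
double sum. -/
lemma hasDerivAt_double_sum {n : ℕ} (i : Fin n) (F : Fin n → Fin n → ℝ → ℝ) (g : Fin n → ℝ)
    (x : ℝ) (hsymm : ∀ a b, F a b = F b a)
    (hoff : ∀ a b, a ≠ i → b ≠ i → HasDerivAt (F a b) 0 x)
    (hdiag : HasDerivAt (F i i) 0 x)
    (hrow : ∀ k, k ≠ i → HasDerivAt (F i k) (g k) x) :
    HasDerivAt (fun t => ∑ a, ∑ b, F a b t) (2 * ∑ k ∈ Finset.univ.erase i, g k) x := by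
  have h : HasDerivAt (fun t => ∑ a, ∑ b, F a b t)
      (∑ a, ∑ b, if a = i then (if b = i then 0 else g b) else if b = i then g a else 0) x := by
    refine HasDerivAt.fun_sum fun a _ => HasDerivAt.fun_sum fun b _ => ?_
    split_ifs with ha hb hb
    · subst ha; subst hb; exact hdiag
    · subst ha; exact hrow b hb
    · subst hb; rw [hsymm]; exact hrow a ha
    · exact hoff a b ha hb
  convert h using 1
  rw [← Finset.add_sum_erase _ _ (Finset.mem_univ i), two_mul]
  congr 1
  · rw [← Finset.add_sum_erase _ _ (Finset.mem_univ i)]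
    simp only [if_true, zero_add]
    exact Finset.sum_congr rfl fun k hk => by rw [if_neg (Finset.ne_of_mem_erase hk)]
  · refine Finset.sum_congr rfl fun k hk => ?_
    simp [Finset.ne_of_mem_erase hk]

/-- Derivative of the general quadratic polynomial that a row-`i` summand reduces to. -/
lemma hasDerivAt_quadratic (β p c x : ℝ) :
    HasDerivAt (fun t : ℝ => β * (t ^ 2 - 2 * p * t + c)) (β * (2 * x - 2 * p)) x := by
  have h := (((hasDerivAt_pow 2 x).sub
    ((hasDerivAt_id' x).const_mul (2 * p))).add_const c).const_mul β
  refine h.congr_deriv ?_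
  norm_num

/-- The partial derivatives of the line energy `H_L` with respect to the
subtransient voltages `E''_{qi}` and `E''_{di}` equal `−I_{di}` and `I_{qi}`
respectively, where `I_{di}, I_{qi}` are the dq-axis generator currents and
`B_{ii} := Σ_{k≠i} B_{ik}`. -/
theorem stmt_8 (n : ℕ) (hn : 1 ≤ n) (B : Matrix (Fin n) (Fin n) ℝ) (hB : B.IsSymm)
    (δ Ed Eq : Fin n → ℝ) (i : Fin n) :
    HasDerivAt (fun t : ℝ => HL B δ Ed (Function.update Eq i t))
      (-((∑ k ∈ Finset.univ.erase i, B i k) * Eq i -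
          ∑ k ∈ Finset.univ.erase i, B i k *
            (Ed k * Real.sin (δ i - δ k) + Eq k * Real.cos (δ i - δ k))))
      (Eq i) ∧
    HasDerivAt (fun t : ℝ => HL B δ (Function.update Ed i t) Eq)
      (-(∑ k ∈ Finset.univ.erase i, B i k) * Ed i -
          ∑ k ∈ Finset.univ.erase i, B i k *
            (Eq k * Real.sin (δ i - δ k) - Ed k * Real.cos (δ i - δ k)))
      (Ed i) := by
  constructor
  · have h := (hasDerivAt_double_sum i (fun a b t => B a b *
      (2 * (Ed a * Function.update Eq i t b - Ed b * Function.update Eq i t a)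
          * Real.sin (δ a - δ b)
        - 2 * (Ed a * Ed b + Function.update Eq i t a * Function.update Eq i t b)
          * Real.cos (δ a - δ b)
        + Ed a ^ 2 + Ed b ^ 2
        + Function.update Eq i t a ^ 2 + Function.update Eq i t b ^ 2))
      (fun k => B i k * (2 * Eq i - 2 * (Ed k * Real.sin (δ i - δ k) + Eq k * Real.cos (δ i - δ k))))
      (Eq i) ?_ ?_ ?_ ?_).const_mul (-(1 / 4))
    · refine h.congr_deriv ?_
      simp only [Finset.mul_sum, Finset.sum_mul, ← Finset.sum_sub_distrib,
        ← Finset.sum_neg_distrib]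
      exact Finset.sum_congr rfl fun k _ => by ring
    · intro a b
      funext t
      rw [hB.apply b a, ← neg_sub (δ b) (δ a), Real.sin_neg, Real.cos_neg]
      ring
    · intro a b ha hb
      simp only [Function.update_of_ne ha, Function.update_of_ne hb]
      exact hasDerivAt_const _ _
    · -- On the diagonal `sin 0 = 0` and `cos 0 = 1`, and the squares cancel.
      refine (hasDerivAt_const (Eq i) (0 : ℝ)).congr_of_eventuallyEq (.of_forall fun t => ?_)
      simp only [sub_self, Real.sin_zero, Real.cos_zero]
      ring
    · intro k hk
      refine (hasDerivAt_quadratic (B i k)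
        (Ed k * Real.sin (δ i - δ k) + Eq k * Real.cos (δ i - δ k))
        (2 * Ed i * Eq k * Real.sin (δ i - δ k)
          - 2 * Ed i * Ed k * Real.cos (δ i - δ k)
          + Ed i ^ 2 + Ed k ^ 2 + Eq k ^ 2)
        (Eq i)).congr_of_eventuallyEq (.of_forall fun t => ?_)
      simp only [Function.update_self, Function.update_of_ne hk]
      ring
  · have h := (hasDerivAt_double_sum i (fun a b t => B a b *
      (2 * (Function.update Ed i t a * Eq b - Function.update Ed i t b * Eq a)
          * Real.sin (δ a - δ b)
        - 2 * (Function.update Ed i t a * Function.update Ed i t b + Eq a * Eq b)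
          * Real.cos (δ a - δ b)
        + Function.update Ed i t a ^ 2 + Function.update Ed i t b ^ 2
        + Eq a ^ 2 + Eq b ^ 2))
      (fun k => B i k * (2 * Ed i - 2 * (Ed k * Real.cos (δ i - δ k) - Eq k * Real.sin (δ i - δ k))))
      (Ed i) ?_ ?_ ?_ ?_).const_mul (-(1 / 4))
    · refine h.congr_deriv ?_
      simp only [Finset.mul_sum, Finset.sum_mul, ← Finset.sum_sub_distrib,
        ← Finset.sum_neg_distrib]
      exact Finset.sum_congr rfl fun k _ => by ring
    · intro a b
      funext t
      rw [hB.apply b a, ← neg_sub (δ b) (δ a), Real.sin_neg, Real.cos_neg]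
      ring
    · intro a b ha hb
      simp only [Function.update_of_ne ha, Function.update_of_ne hb]
      exact hasDerivAt_const _ _
    · -- On the diagonal `sin 0 = 0` and `cos 0 = 1`, and the squares cancel.
      refine (hasDerivAt_const (Ed i) (0 : ℝ)).congr_of_eventuallyEq (.of_forall fun t => ?_)
      simp only [sub_self, Real.sin_zero, Real.cos_zero]
      ring
    · intro k hk
      refine (hasDerivAt_quadratic (B i k)
        (Ed k * Real.cos (δ i - δ k) - Eq k * Real.sin (δ i - δ k))
        (- 2 * Ed k * Eq i * Real.sin (δ i - δ k)
          - 2 * Eq i * Eq k * Real.cos (δ i - δ k)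
          + Ed k ^ 2 + Eq i ^ 2 + Eq k ^ 2)
        (Ed i)).congr_of_eventuallyEq (.of_forall fun t => ?_)
      simp only [Function.update_self, Function.update_of_ne hk]
      ring
end

section
/- Let Q ∈ ℝ^{n×n} be symmetric positive definite, K ∈ ℝ^{n×n} arbitrary, P_d ∈ ℝⁿ, and let L_c ∈ ℝ^{n×n} be symmetric positive semidefinite with kernel exactly the span of the all-ones vector 𝟙 (Laplacian of a connected weighted undirected communication graph). Suppose θ, ω ∈ ℝⁿ satisfy: (i) ω = ω*·𝟙 for some ω* ∈ ℝ; (ii) the controller steady-state equation 0 = −L_c·θ − Q⁻¹·ω; and (iii) the supply–demand balance 𝟙ᵀ(Q⁻¹θ − Kω) = 𝟙ᵀP_d. Then ω = 0 and the resulting power injection P_m := Q⁻¹θ − Kω equals the optimal dispatch P* := λ*·Q⁻¹𝟙 with λ* := (𝟙ᵀP_d)/(𝟙ᵀQ⁻¹𝟙); in particular P_m minimizes (1/2)PᵀQP over {P : 𝟙ᵀP = 𝟙ᵀP_d}. -/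
/-!
Since `L_c` is symmetric and `ω ∈ ker L_c`, pairing the steady-state equation with `ω` gives
`ωᵀQ⁻¹ω = 0`, so `ω = 0` because `Q⁻¹` is positive definite. Then `L_cθ = 0`, so `θ = c𝟙` and
`P_m = c Q⁻¹𝟙`; the balance equation identifies `c` with `λ*`. Optimality holds because
`Q P_m = c𝟙` is orthogonal to every feasible direction `d = P - P_m`, whence
`PᵀQP = P_mᵀQP_m + dᵀQd`.
-/

open Matrix

/-- The all-ones vector in `ℝⁿ`. -/
def ones (n : ℕ) : Fin n → ℝ := fun _ => 1

theorem dotProduct_mulVec_comm_of_isHermitian {n : ℕ} {A : Matrix (Fin n) (Fin n) ℝ}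
    (hA : A.IsHermitian) (x y : Fin n → ℝ) : x ⬝ᵥ A.mulVec y = y ⬝ᵥ A.mulVec x := by
  have hT : Aᵀ = A := by simpa using hA.eq
  rw [dotProduct_mulVec, ← mulVec_transpose, hT, dotProduct_comm]

/-- Every closed-loop steady state of the distributed consensus controller
(`ω` equal across machines, `0 = −L_cθ − Q⁻¹ω`, supply–demand balance) has zero
frequency deviation and yields the optimal dispatch `P* = λ*·Q⁻¹𝟙` with
`λ* = 𝟙ᵀP_d/(𝟙ᵀQ⁻¹𝟙)`, which minimizes `(1/2)PᵀQP` over `{P : 𝟙ᵀP = 𝟙ᵀP_d}`. -/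
theorem stmt_16 {n : ℕ} (Q K Lc : Matrix (Fin n) (Fin n) ℝ)
    (hQ : Q.PosDef) (hLc : Lc.PosSemidef)
    (hker : ∀ x : Fin n → ℝ, Lc.mulVec x = 0 ↔ ∃ c : ℝ, x = c • ones n)
    (Pd θ ω : Fin n → ℝ) (ωstar : ℝ)
    (hω : ω = ωstar • ones n)
    (hsteady : (0 : Fin n → ℝ) = -(Lc.mulVec θ) - Q⁻¹.mulVec ω)
    (hbalance : ones n ⬝ᵥ (Q⁻¹.mulVec θ - K.mulVec ω) = ones n ⬝ᵥ Pd) :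
    ω = 0 ∧
    Q⁻¹.mulVec θ - K.mulVec ω =
      ((ones n ⬝ᵥ Pd) / (ones n ⬝ᵥ Q⁻¹.mulVec (ones n))) • Q⁻¹.mulVec (ones n) ∧
    ∀ P : Fin n → ℝ, ones n ⬝ᵥ P = ones n ⬝ᵥ Pd →
      (1 / 2 : ℝ) * ((Q⁻¹.mulVec θ - K.mulVec ω) ⬝ᵥ Q.mulVec (Q⁻¹.mulVec θ - K.mulVec ω)) ≤
        (1 / 2 : ℝ) * (P ⬝ᵥ Q.mulVec P) := by
  have hω0 : ω = 0 := by
    by_contra hne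
    have hpos : 0 < ω ⬝ᵥ Q⁻¹.mulVec ω := by
      simpa using hQ.inv.dotProduct_mulVec_pos hne
    have hLω : Lc.mulVec ω = 0 := (hker ω).2 ⟨ωstar, hω⟩
    have hsymm : ω ⬝ᵥ Lc.mulVec θ = 0 := by
      rw [dotProduct_mulVec_comm_of_isHermitian hLc.isHermitian, hLω, dotProduct_zero]
    have h := congrArg (fun v => ω ⬝ᵥ v) hsteady
    simp only [dotProduct_zero, dotProduct_sub, dotProduct_neg, hsymm] at h
    linarith
  have hLθ : Lc.mulVec θ = 0 := by
    simpa [hω0, eq_comm] using hsteady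
  obtain ⟨c, hc⟩ := (hker θ).1 hLθ
  have hPm : Q⁻¹.mulVec θ - K.mulVec ω = c • Q⁻¹.mulVec (ones n) := by
    rw [hω0, hc, mulVec_zero, sub_zero, mulVec_smul]
  rw [hPm] at hbalance ⊢
  refine ⟨hω0, ?_, fun P hP => ?_⟩
  · -- For `n = 0` the quotient is `0 / 0`, but all vectors coincide.
    rcases Nat.eq_zero_or_pos n with rfl | hn
    · exact Subsingleton.elim _ _
    · have hone : ones n ≠ 0 := fun h => one_ne_zero (congrFun h ⟨0, hn⟩)
      have hpos : 0 < ones n ⬝ᵥ Q⁻¹.mulVec (ones n) := by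
        simpa using hQ.inv.dotProduct_mulVec_pos hone
      rw [← hbalance, dotProduct_smul, smul_eq_mul, mul_div_cancel_right₀ _ hpos.ne']
  · set X := c • Q⁻¹.mulVec (ones n) with hX
    have hQX : Q.mulVec X = c • ones n := by
      rw [hX, mulVec_smul, mulVec_mulVec,
        mul_nonsing_inv _ ((isUnit_iff_isUnit_det Q).1 hQ.isUnit), one_mulVec]
    have horth : (P - X) ⬝ᵥ Q.mulVec X = 0 := by
      rw [hQX, dotProduct_smul, dotProduct_comm, dotProduct_sub, hP, hbalance, sub_self, smul_zero]
    have hnonneg : 0 ≤ (P - X) ⬝ᵥ Q.mulVec (P - X) := by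
      simpa using hQ.posSemidef.dotProduct_mulVec_nonneg (P - X)
    have hcomm := dotProduct_mulVec_comm_of_isHermitian hQ.isHermitian P X
    simp only [mulVec_sub, dotProduct_sub, sub_dotProduct] at horth hnonneg
    linarith
end
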